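/- Sandwiching lemma: Let p ∈ (1,∞), let K ⊆ X be finite, let g ∈ C(K) with g ≥ 0, and let f ∈ C_c(X∖K) with f ≥ 0 such that λ₀(supp f ∪ K) > 0. Let u, v ∈ F(K) satisfy Hu ≤ g ≤ Hv on K, u ≤ f ≤ v on ∂K ∪ supp f, and 0 ≤ u ≤ v on K. Then there exists a function w ≥ 0 vanishing outside K ∪ supp f such that Hw = g on K, w = f on ∂K ∪ supp f, and u ≤ w ≤ v on K. Moreover, if K is connected and either g ≠ 0 on K, or supp f ∩ ∂K = {x₀} with f(x₀) > 0, then w is unique. -/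

import Mathlib

open scoped BigOperators

/-- `⟨a⟩_p := |a|^{p-1} · sgn(a)`. -/
noncomputable def pPow (p a : ℝ) : ℝ := |a| ^ (p - 1) * Real.sign a

/-- `C(V)`: real-valued functions on `X` vanishing outside `V`. -/
def MemC {X : Type*} (V : Set X) (f : X → ℝ) : Prop := ∀ x ∉ V, f x = 0

/-- `C_c(V)`: finitely supported functions with support contained in `V`. -/
def MemCc {X : Type*} (V : Set X) (f : X → ℝ) : Prop :=
  (Function.support f).Finite ∧ ∀ x ∉ V, f x = 0

/-- The formal space `F(V)`. -/
def MemF {X : Type*} (b : X → X → ℝ) (p : ℝ) (V : Set X) (f : X → ℝ) : Prop :=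
  ∀ x ∈ V, Summable fun y => b x y * |f y| ^ (p - 1)

/-- The domain `D` of the energy functional. -/
def MemD {X : Type*} (b : X → X → ℝ) (c : X → ℝ) (p : ℝ) (f : X → ℝ) : Prop :=
  (Summable fun z : X × X => b z.1 z.2 * |f z.1 - f z.2| ^ p) ∧
  (Summable fun x => |c x| * |f x| ^ p)

/-- The `p`-energy functional `h`. -/
noncomputable def energy {X : Type*} (b : X → X → ℝ) (c : X → ℝ) (p : ℝ) (f : X → ℝ) : ℝ :=
  (1 / 2) * ∑' z : X × X, b z.1 z.2 * |f z.1 - f z.2| ^ p + ∑' x, c x * |f x| ^ p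

/-- The `p`-Schrödinger operator `H`. -/
noncomputable def HOp {X : Type*} (m : X → ℝ) (b : X → X → ℝ) (c : X → ℝ) (p : ℝ)
    (f : X → ℝ) (x : X) : ℝ :=
  (1 / m x) * ∑' y, b x y * pPow p (f x - f y) + (c x / m x) * pPow p (f x)

/-- The `p`-Laplacian `L` (i.e. `H` with potential `0`). -/
noncomputable def LOp {X : Type*} (m : X → ℝ) (b : X → X → ℝ) (p : ℝ)
    (f : X → ℝ) (x : X) : ℝ :=
  (1 / m x) * ∑' y, b x y * pPow p (f x - f y)

/-- `(X, m, b)` is a weighted graph. -/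
def IsGraph {X : Type*} (m : X → ℝ) (b : X → X → ℝ) : Prop :=
  (∀ x, 0 < m x) ∧ (∀ x y, 0 ≤ b x y) ∧ (∀ x y, b x y = b y x) ∧
  (∀ x, b x x = 0) ∧ (∀ x, Summable fun y => b x y)

/-- A set `V` is connected w.r.t. the graph: any two of its vertices are joined by a
path of neighbours inside `V`. -/
def ConnectedIn {X : Type*} (b : X → X → ℝ) (V : Set X) : Prop :=
  ∀ x ∈ V, ∀ y ∈ V, Relation.ReflTransGen (fun u v => u ∈ V ∧ v ∈ V ∧ 0 < b u v) x y

/-- The (outer) boundary `∂V`. -/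
def bdry {X : Type*} (b : X → X → ℝ) (V : Set X) : Set X :=
  {y | y ∉ V ∧ ∃ z ∈ V, 0 < b y z}

/-- `u` is harmonic on `V` (w.r.t. `H`). -/
def HarmonicOn {X : Type*} (m : X → ℝ) (b : X → X → ℝ) (c : X → ℝ) (p : ℝ)
    (V : Set X) (u : X → ℝ) : Prop := ∀ x ∈ V, HOp m b c p u x = 0

/-- `u` is superharmonic on `V` (w.r.t. `H`). -/
def SuperharmonicOn {X : Type*} (m : X → ℝ) (b : X → X → ℝ) (c : X → ℝ) (p : ℝ)
    (V : Set X) (u : X → ℝ) : Prop := ∀ x ∈ V, 0 ≤ HOp m b c p u x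

/-- `h` is non-negative on `C_c(V)`. -/
def EnergyNonneg {X : Type*} (b : X → X → ℝ) (c : X → ℝ) (p : ℝ) (V : Set X) : Prop :=
  ∀ φ : X → ℝ, MemCc V φ → 0 ≤ energy b c p φ

/-- `h` is subcritical in `V`: a Hardy inequality holds. -/
def Subcritical {X : Type*} (b : X → X → ℝ) (c : X → ℝ) (p : ℝ) (V : Set X) : Prop :=
  ∃ w : X → ℝ, (∀ x, 0 ≤ w x) ∧ w ≠ 0 ∧
    ∀ φ : X → ℝ, MemCc V φ → (∑' x, |φ x| ^ p * w x) ≤ energy b c p φ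

/-- `h` is critical in `V`. -/
def Critical {X : Type*} (b : X → X → ℝ) (c : X → ℝ) (p : ℝ) (V : Set X) : Prop :=
  EnergyNonneg b c p V ∧ ¬ Subcritical b c p V

/-- The bottom of the spectrum / variational constant `λ₀(V)`. -/
noncomputable def lam0 {X : Type*} (m : X → ℝ) (b : X → X → ℝ) (c : X → ℝ) (p : ℝ)
    (V : Set X) : ℝ :=
  sInf {r : ℝ | ∃ φ : X → ℝ, MemCc V φ ∧ φ ≠ 0 ∧
    r = energy b c p φ / ∑' x, |φ x| ^ p * m x}

/-- The variational `p`-capacity `cap_h(x, V)`. -/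
noncomputable def capH {X : Type*} (b : X → X → ℝ) (c : X → ℝ) (p : ℝ)
    (V : Set X) (x : X) : ℝ :=
  sInf {r : ℝ | ∃ φ : X → ℝ, MemCc V φ ∧ φ x = 1 ∧ r = energy b c p φ}

/-- The weighted bracket `⟨f, g⟩_V = Σ_{x ∈ V} f(x) g(x) m(x)`. -/
noncomputable def bracket {X : Type*} (m : X → ℝ) (V : Set X) (f g : X → ℝ) : ℝ :=
  ∑' x, Set.indicator V (fun x => f x * g x * m x) x

/-- `u ∈ M(V ∖ K)`: positive harmonic function of minimal growth in a neighbourhood of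
infinity in `V` (harmonic on `V∖K`, positive on `V ∪ ∂V`). -/
def MemM {X : Type*} (m : X → ℝ) (b : X → X → ℝ) (c : X → ℝ) (p : ℝ)
    (V K : Set X) (u : X → ℝ) : Prop :=
  HarmonicOn m b c p (V \ K) u ∧
  (∀ x ∈ V ∪ bdry b V, 0 ≤ u x) ∧ (∃ x ∈ V ∪ bdry b V, u x ≠ 0) ∧
  ∀ K' : Set X, K ⊆ K' → K' ⊆ V → K'.Finite → ConnectedIn b K' →
    ∀ v : X → ℝ, MemF b p (V \ K') v →
      (∀ x ∈ V \ K', 0 ≤ v x) → (∃ x ∈ V \ K', v x ≠ 0) →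
      SuperharmonicOn m b c p (V \ K') v →
      (∀ x ∈ K', u x ≤ v x) → ∀ x ∈ V \ K', u x ≤ v x

/-- `u` is a normalised Green's function in `V` at `o`. -/
def IsNormalisedGreen {X : Type*} (m : X → ℝ) (b : X → X → ℝ) (c : X → ℝ) (p : ℝ)
    (V : Set X) (o : X) (u : X → ℝ) : Prop :=
  MemM m b c p V {o} u ∧ MemF b p V u ∧ HOp m b c p u o ≠ 0 ∧
  ∀ x ∈ V, HOp m b c p u x = Set.indicator {o} (fun _ => (1:ℝ)) x


/-- `w` solves the sandwiched Poisson–Dirichlet problem of the sandwiching lemma. -/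
def SandwichSol {X : Type*} (m : X → ℝ) (b : X → X → ℝ) (c : X → ℝ) (p : ℝ)
    (K : Set X) (g f u v w : X → ℝ) : Prop :=
  (∀ x, 0 ≤ w x) ∧ (∀ x ∉ K ∪ Function.support f, w x = 0) ∧
  (∀ x ∈ K, HOp m b c p w x = g x) ∧
  (∀ x ∈ bdry b K ∪ Function.support f, w x = f x) ∧
  ∀ x ∈ K, u x ≤ w x ∧ w x ≤ v x

theorem pPow_of_nonneg' {p a : ℝ} (hp : 1 < p) (ha : 0 ≤ a) : pPow p a = a ^ (p - 1) := by
  unfold pPow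
  rcases ha.eq_or_lt with h | h
  · subst h
    simp [Real.zero_rpow (by linarith : p - 1 ≠ 0)]
  · rw [Real.sign_of_pos h, abs_of_pos h, mul_one]

theorem pPow_neg' (p a : ℝ) : pPow p (-a) = - pPow p a := by
  unfold pPow
  rw [abs_neg, Real.sign_neg]; ring

theorem pPow_strictMono' {p : ℝ} (hp : 1 < p) : StrictMono (pPow p) := by
  have hq : 0 < p - 1 := by linarith
  have key : ∀ a c : ℝ, 0 ≤ a → a < c → pPow p a < pPow p c := by
    intro a c ha hac
    rw [pPow_of_nonneg' hp ha, pPow_of_nonneg' hp (ha.trans hac.le)]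
    exact Real.rpow_lt_rpow ha hac hq
  have h0 : pPow p 0 = 0 := by simp [pPow]
  intro a c hac
  rcases le_or_gt 0 a with ha | ha
  · exact key a c ha hac
  · have h1 : pPow p a < 0 := by
      have := key 0 (-a) le_rfl (by linarith)
      rw [pPow_neg', h0] at this; linarith
    rcases le_or_gt 0 c with hc | hc
    · have : pPow p 0 ≤ pPow p c := by
        rcases hc.eq_or_lt with h | h
        · rw [← h]
        · exact (key 0 c le_rfl h).le
      linarith
    · have := key (-c) (-a) (by linarith) (by linarith)
      rw [pPow_neg', pPow_neg'] at this; linarith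

theorem pPow_continuous' {p : ℝ} (hp : 1 < p) : Continuous (pPow p) := by
  have hq : 0 < p - 1 := by linarith
  have h : pPow p = fun a => (max a 0) ^ (p - 1) - (max (-a) 0) ^ (p - 1) := by
    funext a
    rcases le_total 0 a with ha | ha
    · rw [pPow_of_nonneg' hp ha, max_eq_left ha, max_eq_right (by linarith),
        Real.zero_rpow hq.ne', sub_zero]
    · have : pPow p a = - pPow p (-a) := by rw [pPow_neg']; ring
      rw [this, pPow_of_nonneg' hp (by linarith), max_eq_right ha, max_eq_left (by linarith),
        Real.zero_rpow hq.ne', zero_sub]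
  rw [h]
  refine Continuous.sub ?_ ?_
  · exact (continuous_id.max continuous_const).rpow_const (fun _ => Or.inr hq.le)
  · exact (continuous_neg.max continuous_const).rpow_const (fun _ => Or.inr hq.le)

theorem pPow_mul' {p t : ℝ} (ht : 0 < t) (a : ℝ) :
    pPow p (t * a) = t ^ (p - 1) * pPow p a := by
  unfold pPow
  rw [abs_mul, abs_of_pos ht, Real.mul_rpow ht.le (abs_nonneg a)]
  have : Real.sign (t * a) = Real.sign a := by
    rcases lt_trichotomy a 0 with h | h | h
    · rw [Real.sign_of_neg h, Real.sign_of_neg (mul_neg_of_pos_of_neg ht h)]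
    · simp [h]
    · rw [Real.sign_of_pos h, Real.sign_of_pos (mul_pos ht h)]
  rw [this]; ring

theorem pPow_abs_le' {p M a : ℝ} (hp : 1 < p) (h : |a| ≤ M) : |pPow p a| ≤ M ^ (p - 1) := by
  have h1 : |pPow p a| ≤ |a| ^ (p - 1) := by
    unfold pPow
    rw [abs_mul, abs_of_nonneg (Real.rpow_nonneg (abs_nonneg a) _)]
    have : |Real.sign a| ≤ 1 := by
      rcases Real.sign_apply_eq a with h | h | h <;> rw [h] <;> norm_num
    have h2 := Real.rpow_nonneg (abs_nonneg a) (p - 1)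
    nlinarith
  exact h1.trans (Real.rpow_le_rpow (abs_nonneg a) h (by linarith))

theorem hop_summable' {X : Type*} {b : X → X → ℝ} {p : ℝ} (hp : 1 < p)
    (hb : ∀ x y, 0 ≤ b x y) (hs : ∀ x, Summable fun y => b x y)
    {K : Set X} {w : X → ℝ} (hw : MemF b p K w) {x : X} (hx : x ∈ K) :
    Summable fun y => b x y * pPow p (w x - w y) := by
  have hq : 0 ≤ p - 1 := by linarith
  have hS : Summable fun y => (2 : ℝ) ^ (p - 1) *
      (b x y * |w x| ^ (p - 1) + b x y * |w y| ^ (p - 1)) :=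
    (((hs x).mul_right _).add (hw x hx)).mul_left _
  refine Summable.of_norm_bounded hS ?_
  intro y
  rw [Real.norm_eq_abs, abs_mul, abs_of_nonneg (hb x y)]
  have h1 : |w x - w y| ≤ 2 * max |w x| |w y| := by
    have := abs_sub (w x) (w y)
    have h2 := le_max_left |w x| |w y|
    have h3 := le_max_right |w x| |w y|
    linarith
  have h2 := pPow_abs_le' hp h1
  rw [Real.mul_rpow (by norm_num) (le_max_of_le_left (abs_nonneg _))] at h2
  have h3 : (max |w x| |w y|) ^ (p - 1) ≤ |w x| ^ (p - 1) + |w y| ^ (p - 1) := by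
    have e1 := Real.rpow_nonneg (abs_nonneg (w x)) (p - 1)
    have e2 := Real.rpow_nonneg (abs_nonneg (w y)) (p - 1)
    rcases max_choice |w x| |w y| with h | h <;> rw [h] <;> linarith
  have h4 : (0 : ℝ) ≤ 2 ^ (p - 1) := by positivity
  calc b x y * |pPow p (w x - w y)|
      ≤ b x y * (2 ^ (p - 1) * (|w x| ^ (p - 1) + |w y| ^ (p - 1))) := by
        apply mul_le_mul_of_nonneg_left _ (hb x y)
        exact h2.trans (mul_le_mul_of_nonneg_left h3 h4)
    _ = _ := by ring

theorem hop_le' {X : Type*} {m : X → ℝ} {b : X → X → ℝ} {c : X → ℝ} {p : ℝ} (hp : 1 < p)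
    (hm : ∀ x, 0 < m x) (hb : ∀ x y, 0 ≤ b x y) {w z : X → ℝ} {x : X}
    (sw : Summable fun y => b x y * pPow p (w x - w y))
    (sz : Summable fun y => b x y * pPow p (z x - z y))
    (hx : w x = z x) (hy : ∀ y, 0 < b x y → w y ≤ z y) :
    HOp m b c p z x ≤ HOp m b c p w x ∧
    (HOp m b c p w x = HOp m b c p z x → ∀ y, 0 < b x y → w y = z y) := by
  have hle : ∀ y, b x y * pPow p (z x - z y) ≤ b x y * pPow p (w x - w y) := by
    intro y
    rcases (hb x y).eq_or_lt with h | h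
    · rw [← h]; simp
    · apply mul_le_mul_of_nonneg_left _ h.le
      apply (pPow_strictMono' hp).monotone
      have := hy y h
      linarith
  have hm1 : 0 < 1 / m x := one_div_pos.mpr (hm x)
  refine ⟨?_, ?_⟩
  · unfold HOp
    rw [hx]
    have := Summable.tsum_le_tsum hle sz sw
    rw [hx] at this
    have := mul_le_mul_of_nonneg_left this hm1.le
    linarith
  · intro heq y hby
    by_contra hne
    have hlt : w y < z y := lt_of_le_of_ne (hy y hby) hne
    have : b x y * pPow p (z x - z y) < b x y * pPow p (w x - w y) := by
      apply mul_lt_mul_of_pos_left _ hby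
      apply pPow_strictMono' hp
      linarith
    have h2 := Summable.tsum_lt_tsum hle this sz sw
    have h3 := mul_lt_mul_of_pos_left h2 hm1
    unfold HOp at heq
    rw [hx] at heq h3
    linarith

theorem hop_smul' {X : Type*} {m : X → ℝ} {b : X → X → ℝ} {c : X → ℝ} {p t : ℝ}
    (ht : 0 < t) (w : X → ℝ) (x : X) :
    HOp m b c p (fun y => t * w y) x = t ^ (p - 1) * HOp m b c p w x := by
  unfold HOp
  have : ∀ y, b x y * pPow p (t * w x - t * w y)
      = t ^ (p - 1) * (b x y * pPow p (w x - w y)) := by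
    intro y; rw [← mul_sub, pPow_mul' ht]; ring
  simp only [this, pPow_mul' ht, tsum_mul_left]
  ring

theorem prop_conn' {X : Type*} {b : X → X → ℝ} {K : Set X} (hc : ConnectedIn b K)
    (P : X → Prop) (hP : ∀ x ∈ K, P x → ∀ y, 0 < b x y → P y) {x : X} (hx : x ∈ K)
    (h : P x) : ∀ y ∈ K, P y := by
  intro y hy
  have := hc x hx y hy
  clear hy
  induction this with
  | refl => exact h
  | tail _ h2 ih => exact hP _ h2.1 ih _ h2.2.2

theorem uniq_le' {X : Type*} {m : X → ℝ} {b : X → X → ℝ} {c : X → ℝ} {p : ℝ} (hp : 1 < p)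
    (hG : IsGraph m b) {K : Set X} (hK : K.Finite) (hc : ConnectedIn b K) {g f : X → ℝ}
    (hf0 : ∀ x, 0 ≤ f x) (hg0 : ∀ x, 0 ≤ g x)
    (hcond : (∃ x ∈ K, g x ≠ 0) ∨ ∃ x ∈ bdry b K, f x ≠ 0)
    {w₁ w₂ : X → ℝ} (F₁ : MemF b p K w₁) (F₂ : MemF b p K w₂)
    (n₂ : ∀ x, 0 ≤ w₂ x)
    (H₁ : ∀ x ∈ K, HOp m b c p w₁ x = g x) (H₂ : ∀ x ∈ K, HOp m b c p w₂ x = g x)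
    (f₁ : ∀ x ∉ K, w₁ x = f x) (f₂ : ∀ x ∉ K, w₂ x = f x) : ∀ x ∈ K, w₁ x ≤ w₂ x := by
  obtain ⟨hm, hb, hsym, -, hs⟩ := hG
  -- strict positivity
  have hpos : ∀ x ∈ K, 0 < w₂ x := by
    intro x hx
    by_contra hn
    have hx0 : w₂ x = 0 := le_antisymm (not_lt.mp hn) (n₂ x)
    have hz : ∀ y, HOp m b c p (fun _ => (0 : ℝ)) y = 0 := by
      intro y; simp [HOp, pPow]
    have step : ∀ y ∈ K, w₂ y = 0 → g y = 0 ∧ ∀ z, 0 < b y z → w₂ z = 0 := by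
      intro y hy hy0
      have sz : Summable fun z => b y z * pPow p ((fun _ => (0 : ℝ)) y - (fun _ => (0 : ℝ)) z) := by
        simp [pPow]
      have := hop_le' (c := c) hp hm hb (w := fun _ => (0 : ℝ)) (z := w₂) (x := y) sz
        (hop_summable' hp hb hs F₂ hy) hy0.symm (fun z _ => n₂ z)
      rw [hz, H₂ y hy] at this
      have g0 : g y = 0 := le_antisymm this.1 (hg0 y)
      exact ⟨g0, fun z hzb => (this.2 g0.symm z hzb).symm⟩
    have all := prop_conn' hc (fun y => w₂ y = 0) (fun y hy h => (step y hy h).2) hx hx0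
    rcases hcond with ⟨y, hy, hgy⟩ | ⟨y, ⟨hyK, z, hz, hyz⟩, hfy⟩
    · exact hgy (step y hy (all y hy)).1
    · apply hfy
      rw [← f₂ y hyK]
      exact (step z hz (all z hz)).2 y (by rw [hsym]; exact hyz)
  by_contra hcon
  push Not at hcon
  obtain ⟨x', hx', hlt'⟩ := hcon
  obtain ⟨x, hx, hmax⟩ := Set.exists_max_image K (fun x => w₁ x / w₂ x) hK ⟨x', hx'⟩
  set t := w₁ x / w₂ x with ht
  have ht1 : 1 < t := lt_of_lt_of_le ((one_lt_div (hpos x' hx')).mpr hlt') (hmax x' hx')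
  have ht0 : 0 < t := by linarith
  have hle : ∀ y, w₁ y ≤ t * w₂ y := by
    intro y
    by_cases hy : y ∈ K
    · exact (div_le_iff₀ (hpos y hy)).mp (hmax y hy)
    · rw [f₁ y hy, f₂ y hy]
      have := hf0 y
      nlinarith
  have htp : 1 < t ^ (p - 1) := Real.one_lt_rpow ht1 (by linarith)
  have step : ∀ y ∈ K, w₁ y = t * w₂ y → g y = 0 ∧ ∀ z, 0 < b y z → w₁ z = t * w₂ z := by
    intro y hy hyt
    have sz : Summable fun z => b y z * pPow p ((fun z => t * w₂ z) y - (fun z => t * w₂ z) z) := by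
      have := (hop_summable' hp hb hs F₂ hy).mul_left (t ^ (p - 1))
      refine this.congr ?_
      intro z
      show _ = b y z * pPow p (t * w₂ y - t * w₂ z)
      rw [← mul_sub, pPow_mul' ht0]; ring
    have := hop_le' (c := c) hp hm hb (w := w₁) (z := fun z => t * w₂ z) (x := y)
      (hop_summable' hp hb hs F₁ hy) sz hyt (fun z _ => hle z)
    rw [hop_smul' ht0, H₁ y hy, H₂ y hy] at this
    have g0 : g y = 0 := by
      have h1 := this.1
      have h2 := hg0 y
      nlinarith
    exact ⟨g0, this.2 (by rw [g0]; simp)⟩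
  have hxt : w₁ x = t * w₂ x := by
    rw [ht, div_mul_cancel₀ _ (hpos x hx).ne']
  have all := prop_conn' hc (fun y => w₁ y = t * w₂ y) (fun y hy h => (step y hy h).2) hx hxt
  rcases hcond with ⟨y, hy, hgy⟩ | ⟨y, ⟨hyK, z, hz, hyz⟩, hfy⟩
  · exact hgy (step y hy (all y hy)).1
  · apply hfy
    have := (step z hz (all z hz)).2 y (by rw [hsym]; exact hyz)
    rw [f₁ y hyK, f₂ y hyK] at this
    have h3 : (t - 1) * f y = 0 := by linarith
    rcases mul_eq_zero.mp h3 with h | h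
    · linarith
    · exact h

theorem memF_of_finite' {X : Type*} {b : X → X → ℝ} {p : ℝ} (hp : 1 < p) (K : Set X)
    {w : X → ℝ} {S : Set X} (hS : S.Finite) (hw : ∀ x ∉ S, w x = 0) : MemF b p K w := by
  intro x _
  refine summable_of_finite_support (hS.subset ?_)
  intro y hy
  by_contra hn
  apply hy
  simp [hw y hn, Real.zero_rpow (by linarith : p - 1 ≠ 0)]

theorem hop_cont' {X : Type*} {m : X → ℝ} {b : X → X → ℝ} {c : X → ℝ} {p : ℝ} (hp : 1 < p)
    (hb : ∀ x y, 0 ≤ b x y) (hs : ∀ x, Summable fun y => b x y)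
    {M : ℝ} {B : Set (X → ℝ)} (hB : ∀ w ∈ B, ∀ x, |w x| ≤ M) (x : X) :
    ContinuousOn (fun w => HOp m b c p w x) B := by
  unfold HOp
  have hcp := pPow_continuous' hp
  refine ContinuousOn.add (ContinuousOn.mul continuousOn_const ?_) ?_
  · refine continuousOn_tsum (u := fun y => b x y * (2 * M) ^ (p - 1)) ?_ ((hs x).mul_right _) ?_
    · intro y
      exact (continuous_const.mul (hcp.comp
        ((continuous_apply x).sub (continuous_apply y)))).continuousOn
    · intro y w hw
      rw [Real.norm_eq_abs, abs_mul, abs_of_nonneg (hb x y)]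
      apply mul_le_mul_of_nonneg_left _ (hb x y)
      apply pPow_abs_le' hp
      have := abs_sub (w x) (w y)
      have h2 := hB w hw x
      have h3 := hB w hw y
      linarith
  · exact (continuous_const.mul (hcp.comp (continuous_apply x))).continuousOn

theorem exists_sol' {X : Type*} {m : X → ℝ} {b : X → X → ℝ} {c : X → ℝ} {p : ℝ} (hp : 1 < p)
    (hG : IsGraph m b) {K : Set X} (hK : K.Finite) {g f u v : X → ℝ}
    (hfin : (Function.support f).Finite)
    (huF : MemF b p K u) (hvF : MemF b p K v)
    (hHu : ∀ x ∈ K, HOp m b c p u x ≤ g x)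
    (hHv : ∀ x ∈ K, g x ≤ HOp m b c p v x)
    (hbdu : ∀ x ∈ bdry b K, u x ≤ f x ∧ f x ≤ v x)
    (huv : ∀ x ∈ K, u x ≤ v x) :
    ∃ w : X → ℝ, (∀ x ∉ K, w x = f x) ∧ (∀ x ∈ K, HOp m b c p w x = g x) ∧
      ∀ x ∈ K, u x ≤ w x ∧ w x ≤ v x := by
  classical
  obtain ⟨hm, hb, hsym, -, hs⟩ := hG
  set lo : X → ℝ := fun x => if x ∈ K then u x else f x with hlo
  set hi : X → ℝ := fun x => if x ∈ K then v x else f x with hhi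
  set B : Set (X → ℝ) := Set.univ.pi (fun x => Set.Icc (lo x) (hi x)) with hBdef
  have hBc : IsCompact B := isCompact_univ_pi (fun x => isCompact_Icc)
  have hBK : ∀ w ∈ B, ∀ x ∈ K, u x ≤ w x ∧ w x ≤ v x := by
    intro w hw x hx
    have := hw x (Set.mem_univ x)
    simpa [hlo, hhi, hx] using this
  have hBf : ∀ w ∈ B, ∀ x ∉ K, w x = f x := by
    intro w hw x hx
    have := hw x (Set.mem_univ x)
    simp only [hlo, hhi, hx, if_false, Set.mem_Icc] at this
    exact le_antisymm this.2 this.1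
  have hBmk : ∀ w : X → ℝ, (∀ x ∈ K, u x ≤ w x ∧ w x ≤ v x) → (∀ x ∉ K, w x = f x) → w ∈ B := by
    intro w h1 h2 x _
    by_cases hx : x ∈ K
    · simpa [hlo, hhi, hx] using h1 x hx
    · simp [hlo, hhi, hx, h2 x hx]
  have hV : (K ∪ Function.support f).Finite := hK.union hfin
  have hB0 : ∀ w ∈ B, ∀ x ∉ K ∪ Function.support f, w x = 0 := by
    intro w hw x hx
    rw [Set.mem_union, not_or] at hx
    rw [hBf w hw x hx.1]
    exact Function.notMem_support.mp hx.2
  have hBF : ∀ w ∈ B, MemF b p K w := fun w hw => memF_of_finite' hp K hV (hB0 w hw)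
  -- uniform bound
  obtain ⟨M, hM⟩ : ∃ M : ℝ, ∀ w ∈ B, ∀ x, |w x| ≤ M := by
    refine ⟨∑ x ∈ hV.toFinset, (|lo x| + |hi x|), ?_⟩
    intro w hw x
    have hnn : ∀ y ∈ hV.toFinset, 0 ≤ |lo y| + |hi y| := fun y _ => by positivity
    by_cases hx : x ∈ K ∪ Function.support f
    · refine le_trans ?_ (Finset.single_le_sum hnn (hV.mem_toFinset.mpr hx))
      have := hw x (Set.mem_univ x)
      have h1 := neg_abs_le (lo x)
      have h2 := le_abs_self (hi x)
      have h3 := abs_nonneg (lo x)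
      have h4 := abs_nonneg (hi x)
      rw [abs_le]
      constructor <;> linarith [this.1, this.2]
    · rw [hB0 w hw x hx, abs_zero]
      exact Finset.sum_nonneg hnn
  have hcont : ∀ x, ContinuousOn (fun w => HOp m b c p w x) B := fun x => hop_cont' hp hb hs hM x
  set S : Set (X → ℝ) := B ∩ {w | ∀ x ∈ K, HOp m b c p w x ≤ g x} with hSdef
  have hSc : IsCompact S := by
    have h1 : ContinuousOn (fun w => fun x : K => HOp m b c p w x) B :=
      continuousOn_pi.mpr (fun x => hcont x)
    have h2 := h1.preimage_isClosed_of_isClosed hBc.isClosed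
      (isClosed_Iic (a := fun x : K => g x))
    refine hBc.of_isClosed_subset ?_ Set.inter_subset_left
    convert h2 using 2
    ext w
    simp [Pi.le_def]
  have hnb : ∀ x ∈ K, ∀ y ∉ K, 0 < b x y → y ∈ bdry b K := by
    intro x hx y hy hxy
    exact ⟨hy, x, hx, by rw [hsym]; exact hxy⟩
  have hloB : lo ∈ B := hBmk lo (fun x hx => by simpa [hlo, hx] using huv x hx)
    (fun x hx => by simp [hlo, hx])
  have hSne : S.Nonempty := by
    refine ⟨lo, hloB, ?_⟩
    intro x hx
    refine le_trans ?_ (hHu x hx)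
    refine (hop_le' hp hm hb (hop_summable' hp hb hs huF hx)
      (hop_summable' hp hb hs (hBF lo hloB) hx) (by simp [hlo, hx]) ?_).1
    intro y hy
    by_cases hyK : y ∈ K
    · simp [hlo, hyK]
    · simpa [hlo, hyK] using (hbdu y (hnb x hx y hyK hy)).1
  obtain ⟨w, hwS, hwmax⟩ := hSc.exists_isMaxOn hSne
    (f := fun w : X → ℝ => ∑ x ∈ hK.toFinset, w x)
    (continuous_finset_sum _ (fun x _ => continuous_apply x)).continuousOn
  have hwB : w ∈ B := hwS.1
  refine ⟨w, hBf w hwB, ?_, hBK w hwB⟩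
  intro x hx
  refine le_antisymm (hwS.2 x hx) ?_
  by_contra hcon
  push Not at hcon
  have hwv : w x < v x := by
    refine lt_of_le_of_ne (hBK w hwB x hx).2 ?_
    intro heq
    have := (hop_le' (c := c) hp hm hb (hop_summable' hp hb hs (hBF w hwB) hx)
      (hop_summable' hp hb hs hvF hx) heq ?_).1
    · linarith [hHv x hx]
    · intro y hy
      by_cases hyK : y ∈ K
      · exact (hBK w hwB y hyK).2
      · rw [hBf w hwB y hyK]
        exact (hbdu y (hnb x hx y hyK hy)).2
  have hupB : ∀ s ∈ Set.Icc (w x) (v x), Function.update w x s ∈ B := by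
    intro s hsI
    refine hBmk _ ?_ ?_
    · intro y hy
      by_cases hyx : y = x
      · subst hyx
        simp only [Function.update_self]
        exact ⟨(hBK w hwB y hy).1.trans hsI.1, hsI.2⟩
      · simpa [Function.update_of_ne hyx] using hBK w hwB y hy
    · intro y hy
      have hyx : y ≠ x := fun h => hy (h ▸ hx)
      rw [Function.update_of_ne hyx, hBf w hwB y hy]
  have hc2 : ContinuousOn (fun s => HOp m b c p (Function.update w x s) x)
      (Set.Icc (w x) (v x)) := by
    have hu : Continuous (fun s : ℝ => Function.update w x s) :=
      (continuous_const (y := w)).update x continuous_id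
    exact (hcont x).comp hu.continuousOn hupB
  have hev : ∀ᶠ s in nhdsWithin (w x) (Set.Icc (w x) (v x)),
      HOp m b c p (Function.update w x s) x < g x := by
    have := hc2 (w x) ⟨le_rfl, hwv.le⟩
    refine this.eventually_lt_const ?_
    simpa using hcon
  have hev2 : ∀ᶠ s in nhdsWithin (w x) (Set.Ioo (w x) (v x)),
      HOp m b c p (Function.update w x s) x < g x :=
    hev.filter_mono (nhdsWithin_mono _ Set.Ioo_subset_Icc_self)
  haveI : (nhdsWithin (w x) (Set.Ioo (w x) (v x))).NeBot := left_nhdsWithin_Ioo_neBot hwv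
  obtain ⟨s, hs1, hs2⟩ := (hev2.and self_mem_nhdsWithin).exists
  have hw'B := hupB s ⟨hs2.1.le, hs2.2.le⟩
  have hle : ∀ y, w y ≤ Function.update w x s y := by
    intro y
    by_cases hyx : y = x
    · subst hyx; simpa using hs2.1.le
    · simp [Function.update_of_ne hyx]
  have hw'S : Function.update w x s ∈ S := by
    refine ⟨hw'B, ?_⟩
    intro y hy
    by_cases hyx : y = x
    · subst hyx; exact hs1.le
    · refine le_trans ?_ (hwS.2 y hy)
      exact (hop_le' hp hm hb (hop_summable' hp hb hs (hBF w hwB) hy)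
        (hop_summable' hp hb hs (hBF _ hw'B) hy) (by simp [Function.update_of_ne hyx])
        (fun z _ => hle z)).1
  have h1 : ∑ y ∈ hK.toFinset, Function.update w x s y ≤ ∑ y ∈ hK.toFinset, w y := hwmax hw'S
  have h2 : ∑ y ∈ hK.toFinset, w y < ∑ y ∈ hK.toFinset, Function.update w x s y :=
    Finset.sum_lt_sum (fun y _ => hle y) ⟨x, hK.mem_toFinset.mpr hx, by simpa using hs2.1⟩
  linarith

theorem stmt14 {X : Type*} [Countable X] [Infinite X]
    (m : X → ℝ) (b : X → X → ℝ) (c : X → ℝ) (p : ℝ)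
    (hG : IsGraph m b) (hgconn : ConnectedIn b Set.univ) (hp : 1 < p)
    (K : Set X) (hK : K.Finite) (g f : X → ℝ)
    (hgC : MemC K g) (hgnn : ∀ x, 0 ≤ g x)
    (hfC : MemCc Kᶜ f) (hfnn : ∀ x, 0 ≤ f x)
    (hlam : 0 < lam0 m b c p (Function.support f ∪ K))
    (u v : X → ℝ) (huF : MemF b p K u) (hvF : MemF b p K v)
    (hHu : ∀ x ∈ K, HOp m b c p u x ≤ g x)
    (hHv : ∀ x ∈ K, g x ≤ HOp m b c p v x)
    (hbdu : ∀ x ∈ bdry b K ∪ Function.support f, u x ≤ f x ∧ f x ≤ v x)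
    (huv : ∀ x ∈ K, 0 ≤ u x ∧ u x ≤ v x) :
    (∃ w : X → ℝ, SandwichSol m b c p K g f u v w) ∧
    (ConnectedIn b K →
      ((∃ x ∈ K, g x ≠ 0) ∨
        ∃ x₀, Function.support f ∩ bdry b K = {x₀} ∧ 0 < f x₀) →
      ∀ w₁ w₂ : X → ℝ, SandwichSol m b c p K g f u v w₁ →
        SandwichSol m b c p K g f u v w₂ → w₁ = w₂) := by
  have hfoff : ∀ x ∉ Function.support f, f x = 0 := fun x hx => Function.notMem_support.mp hx
  have hsK : ∀ x ∈ Function.support f, x ∉ K := by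
    intro x hx hxK
    exact hx (hfC.2 x (by simpa using hxK))
  refine ⟨?_, ?_⟩
  · obtain ⟨w, h1, h2, h3⟩ := exists_sol' hp hG hK hfC.1 huF hvF hHu hHv
      (fun x hx => hbdu x (Or.inl hx)) (fun x hx => (huv x hx).2)
    refine ⟨w, ?_, ?_, h2, ?_, h3⟩
    · intro x
      by_cases hx : x ∈ K
      · exact (huv x hx).1.trans (h3 x hx).1
      · rw [h1 x hx]; exact hfnn x
    · intro x hx
      rw [Set.mem_union, not_or] at hx
      rw [h1 x hx.1]; exact hfoff x hx.2
    · rintro x (hx | hx)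
      · exact h1 x hx.1
      · exact h1 x (hsK x hx)
  · intro hc hcond w₁ w₂ S₁ S₂
    have hcond' : (∃ x ∈ K, g x ≠ 0) ∨ ∃ x ∈ bdry b K, f x ≠ 0 := by
      rcases hcond with h | ⟨x₀, h, h0⟩
      · exact Or.inl h
      · have : x₀ ∈ Function.support f ∩ bdry b K := by rw [h]; rfl
        exact Or.inr ⟨x₀, this.2, h0.ne'⟩
    have hoff : ∀ w, SandwichSol m b c p K g f u v w → ∀ x ∉ K, w x = f x := by
      intro w S x hx
      by_cases hxf : x ∈ Function.support f
      · exact S.2.2.2.1 x (Or.inr hxf)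
      · rw [S.2.1 x (by rw [Set.mem_union, not_or]; exact ⟨hx, hxf⟩), hfoff x hxf]
    have hF : ∀ w, SandwichSol m b c p K g f u v w → MemF b p K w := fun w S =>
      memF_of_finite' hp K (hK.union hfC.1) S.2.1
    have hle : ∀ w w', SandwichSol m b c p K g f u v w → SandwichSol m b c p K g f u v w' →
        ∀ x ∈ K, w x ≤ w' x := fun w w' S S' =>
      uniq_le' hp hG hK hc hfnn hgnn hcond' (hF w S) (hF w' S') S'.1 S.2.2.1 S'.2.2.1
        (hoff w S) (hoff w' S')
    funext x
    by_cases hx : x ∈ K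
    · exact le_antisymm (hle _ _ S₁ S₂ x hx) (hle _ _ S₂ S₁ x hx)
    · rw [hoff _ S₁ x hx, hoff _ S₂ x hx]
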